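/- Let D = (V, E; c; s, t) be a flow network in which every arc belongs to at least one s-t path. If the flow game Γ_D is convex, then every bottleneck arc b ∈ B belongs to exactly one s-t path, i.e., |𝒫_b| = 1 for every b ∈ B. -/

import Mathlib

open scoped Classical
open Finset

noncomputable section

/-- The arcs (consecutive vertex pairs) of a vertex list. -/
def arcsOf {V : Type*} [DecidableEq V] (vs : List V) : Finset (V × V) :=
  (vs.zip vs.tail).toFinset

/-- `vs` is the vertex list of a directed path from `a` to `b` using arcs of `E`,
with pairwise distinct vertices. -/
def IsPathList {V : Type*} (E : Finset (V × V)) (a b : V) (vs : List V) : Prop :=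
  vs.Nodup ∧ vs.head? = some a ∧ vs.getLast? = some b ∧
    vs.Chain' (fun x y => (x, y) ∈ E)

/-- `P` is (the arc set of) an `s`-`t` path in the network with arc set `E`. -/
def IsSTPath {V : Type*} [DecidableEq V] (E : Finset (V × V)) (s t : V)
    (P : Finset (V × V)) : Prop :=
  ∃ vs : List V, IsPathList E s t vs ∧ P = arcsOf vs

/-- The capacity of a path (arc set): the minimum capacity of its arcs. -/
def pathCap {V : Type*} (c : V × V → ℝ) (P : Finset (V × V)) : ℝ :=
  sInf (c '' (P : Set (V × V)))

/-- `e` is a bottleneck arc of some `s`-`t` path, i.e. `e ∈ B`. -/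
def IsBottleneck {V : Type*} [DecidableEq V] (E : Finset (V × V)) (c : V × V → ℝ)
    (s t : V) (e : V × V) : Prop :=
  ∃ P : Finset (V × V), IsSTPath E s t P ∧ e ∈ P ∧ c e = pathCap c P

/-- The finite set `𝒫` of all `s`-`t` paths (as arc sets). -/
def stPaths {V : Type*} [DecidableEq V] (E : Finset (V × V)) (s t : V) :
    Finset (Finset (V × V)) :=
  E.powerset.filter (fun P => IsSTPath E s t P)

/-- The value of a flow `f`: net flow out of the source `s`. -/
def flowValue {V : Type*} [DecidableEq V] (E : Finset (V × V)) (s : V)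
    (f : V × V → ℝ) : ℝ :=
  ∑ e ∈ E.filter (fun e => e.1 = s), f e - ∑ e ∈ E.filter (fun e => e.2 = s), f e

/-- `f` is a feasible flow on the coalition `S`. -/
def IsFeasibleFlow {V : Type*} [DecidableEq V] (E : Finset (V × V)) (c : V × V → ℝ)
    (s t : V) (S : Finset (V × V)) (f : V × V → ℝ) : Prop :=
  (∀ e ∈ E, 0 ≤ f e ∧ f e ≤ c e) ∧
  (∀ e, e ∉ S → f e = 0) ∧
  (∀ v, v ≠ s → v ≠ t →
    ∑ e ∈ E.filter (fun e => e.2 = v), f e = ∑ e ∈ E.filter (fun e => e.1 = v), f e)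

/-- `γ` is the characteristic function of the flow game on `D = (V,E;c;s,t)`:
for each coalition `S ⊆ E`, `γ S` is the maximum value of a feasible flow on `S`. -/
def IsFlowGame {V : Type*} [DecidableEq V] (E : Finset (V × V)) (c : V × V → ℝ)
    (s t : V) (γ : Finset (V × V) → ℝ) : Prop :=
  ∀ S : Finset (V × V), S ⊆ E →
    IsGreatest {x : ℝ | ∃ f, IsFeasibleFlow E c s t S f ∧ flowValue E s f = x} (γ S)

/-- The cooperative game `γ` with player set `E` is convex (supermodular). -/
def GameConvex {V : Type*} [DecidableEq V] (E : Finset (V × V))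
    (γ : Finset (V × V) → ℝ) : Prop :=
  ∀ e ∈ E, ∀ S T : Finset (V × V), S ⊆ T → T ⊆ E.erase e →
    γ (insert e S) - γ S ≤ γ (insert e T) - γ T

/-- The directed graph with arc set `E` contains a directed cycle. -/
def HasDirectedCycle {V : Type*} (E : Finset (V × V)) : Prop :=
  ∃ (v : V) (vs : List V), (v :: vs).Nodup ∧
    (v :: vs).Chain' (fun x y => (x, y) ∈ E) ∧
    ((v :: vs).getLast (List.cons_ne_nil v vs), v) ∈ E

/-!
If the arc sets of two `s`-`t` paths `P` and `Q` differ, then `P ∩ Q` carries no flow, so convexity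
gives `γ P + γ Q ≤ γ (P ∪ Q)`. If `P` and `Q` share a bottleneck arc `b` of `P`, it follows that
`γ (P ∪ Q) > c b`, so `b` cannot be the only arc of `P ∪ Q` leaving a vertex set that contains `s`
but not `t`. Hence `P = Q` as soon as no vertex of one path before `b` lies on the other after `b`.
This applies in particular when `P` and `Q` agree up to `b`, or from `b` on.

That `P` and `Q` are never crossed in this way holds for every common arc `(u, v)`. Otherwise let
`y` be the first vertex of `P` before `u` that lies on `Q` after `v`, and let `A` follow `P` up to
`y` and `Q` from there on. A bottleneck arc of `A` lies on its `P`-part or on its `Q`-part, so `A`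
is `P` or `Q` by the two special cases; but `A` avoids `u`.
-/

theorem exists_append_of_not_disjoint {α : Type*} {l m : List α} (h : ¬ l.Disjoint m) :
    ∃ l₁ x l₂ m₁ m₂, l = l₁ ++ x :: l₂ ∧ m = m₁ ++ x :: m₂ ∧ l₁.Disjoint m := by
  have hfind : (l.find? (· ∈ m)).isSome := by simpa [List.Disjoint] using h
  obtain ⟨x, hx⟩ := Option.isSome_iff_exists.1 hfind
  obtain ⟨hxm, l₁, l₂, rfl, hl₁⟩ := List.find?_eq_some_iff_append.1 hx
  obtain ⟨m₁, m₂, rfl⟩ := List.append_of_mem (of_decide_eq_true hxm)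
  exact ⟨l₁, x, l₂, m₁, m₂, rfl, rfl, by simpa [List.Disjoint] using hl₁⟩

section Arcs

variable {V : Type*} [DecidableEq V] {l l₁ l₂ : List V} {u v x y : V}

theorem arcsOf_cons_cons (x y : V) (l : List V) :
    arcsOf (x :: y :: l) = insert (x, y) (arcsOf (y :: l)) := by
  simp [arcsOf]

theorem arcsOf_append_cons (l₁ : List V) (x : V) (l₂ : List V) :
    arcsOf (l₁ ++ x :: l₂) = arcsOf (l₁ ++ [x]) ∪ arcsOf (x :: l₂) := by
  induction l₁ with
  | nil => simp [arcsOf]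
  | cons a l₁ ih =>
    cases l₁ with
    | nil => simp [arcsOf]
    | cons a' l₁ =>
      simp only [List.cons_append, arcsOf_cons_cons, Finset.insert_union] at ih ⊢
      rw [ih]

theorem arcsOf_append_cons_cons (l₁ : List V) (x y : V) (l₂ : List V) :
    arcsOf (l₁ ++ x :: y :: l₂) = insert (x, y) (arcsOf (l₁ ++ [x]) ∪ arcsOf (y :: l₂)) := by
  rw [arcsOf_append_cons, arcsOf_cons_cons, Finset.union_insert]

theorem mem_arcsOf_append_cons_cons (l₁ : List V) (x y : V) (l₂ : List V) :
    (x, y) ∈ arcsOf (l₁ ++ x :: y :: l₂) := by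
  simp [arcsOf_append_cons_cons]

theorem exists_append_of_mem_arcsOf (h : (x, y) ∈ arcsOf l) :
    ∃ l₁ l₂, l = l₁ ++ x :: y :: l₂ := by
  induction l with
  | nil => simp [arcsOf] at h
  | cons a l ih =>
    cases l with
    | nil => simp [arcsOf] at h
    | cons a' l =>
      rw [arcsOf_cons_cons, Finset.mem_insert, Prod.mk.injEq] at h
      obtain ⟨rfl, rfl⟩ | h := h
      · exact ⟨[], l, rfl⟩
      · obtain ⟨l₁, l₂, hl⟩ := ih h
        exact ⟨a :: l₁, l₂, congrArg (a :: ·) hl⟩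

theorem mem_of_mem_arcsOf {e : V × V} (h : e ∈ arcsOf l) : e.1 ∈ l ∧ e.2 ∈ l :=
  (List.of_mem_zip (List.mem_toFinset.1 h)).imp_right List.mem_of_mem_tail

theorem arcsOf_subset_of_isChain {E : Finset (V × V)} (h : l.IsChain fun x y ↦ (x, y) ∈ E) :
    arcsOf l ⊆ E := by
  rintro ⟨x, y⟩ hxy
  obtain ⟨l₁, l₂, rfl⟩ := exists_append_of_mem_arcsOf hxy
  exact (List.isChain_append_cons_cons.1 h).2.1

theorem sum_arcsOf_sub {G : Type*} [AddCommGroup G] (g : V → G) (hl : l.Nodup)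
    (hx : l.head? = some x) (hy : l.getLast? = some y) :
    ∑ e ∈ arcsOf l, (g e.1 - g e.2) = g x - g y := by
  induction l generalizing x with
  | nil => simp at hx
  | cons a l ih =>
    obtain rfl : a = x := by simpa using hx
    cases l with
    | nil =>
      obtain rfl : a = y := by simpa using hy
      simp [arcsOf]
    | cons a' l =>
      have hnotMem : (a, a') ∉ arcsOf (a' :: l) := fun h ↦
        (List.nodup_cons.1 hl).1 (mem_of_mem_arcsOf h).1
      rw [arcsOf_cons_cons, Finset.sum_insert hnotMem,
        ih (List.nodup_cons.1 hl).2 rfl (by simpa using hy), sub_add_sub_cancel]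

/-- The arcs of `S` that leave the vertex set `X`. For `s ∈ X` and `t ∉ X` these form an `s`-`t` cut
of the network with arc set `S`. -/
def leavingArcs (S : Finset (V × V)) (X : Finset V) : Finset (V × V) :=
  S.filter fun e ↦ e.1 ∈ X ∧ e.2 ∉ X

theorem leavingArcs_arcsOf {X : Finset V} (hin : ∀ x ∈ l₁ ++ [u], x ∈ X)
    (hout : ∀ x ∈ v :: l₂, x ∉ X) :
    leavingArcs (arcsOf (l₁ ++ u :: v :: l₂)) X = {(u, v)} := by
  ext e
  simp only [leavingArcs, arcsOf_append_cons_cons, Finset.mem_filter, Finset.mem_insert,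
    Finset.mem_union, Finset.mem_singleton]
  constructor
  · rintro ⟨rfl | he | he, h₁, h₂⟩
    · rfl
    · exact absurd (hin _ (mem_of_mem_arcsOf he).2) h₂
    · exact absurd h₁ (hout _ (mem_of_mem_arcsOf he).1)
  · rintro rfl
    exact ⟨Or.inl rfl, hin _ (by simp), hout _ (by simp)⟩

end Arcs

namespace IsPathList

variable {V : Type*} {E : Finset (V × V)} {s t u v : V} {l l₁ l₂ : List V}

theorem source_mem (hl : IsPathList E s t (l₁ ++ u :: l₂)) : s ∈ l₁ ++ [u] :=
  List.mem_of_head? (by simpa using hl.2.1)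

theorem target_mem (hl : IsPathList E s t (l₁ ++ u :: v :: l₂)) : t ∈ v :: l₂ :=
  List.mem_of_getLast? (by simpa using hl.2.2.1)

theorem disjoint (hl : IsPathList E s t (l₁ ++ u :: v :: l₂)) :
    (l₁ ++ [u]).Disjoint (v :: l₂) :=
  List.disjoint_of_nodup_append (by simpa using hl.1)

theorem disjoint_before_after (hl : IsPathList E s t (l₁ ++ u :: v :: l₂)) : l₁.Disjoint l₂ :=
  fun _ h₁ h₂ ↦ hl.disjoint (List.mem_append_left _ h₁) (List.mem_cons_of_mem _ h₂)

theorem source_ne_target (hl : IsPathList E s t (l₁ ++ u :: v :: l₂)) : s ≠ t := by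
  rintro rfl
  exact hl.disjoint hl.source_mem hl.target_mem

theorem splice {a a' d w : List V} {y : V} (h : IsPathList E s t (a ++ y :: d))
    (h' : IsPathList E s t (a' ++ y :: w)) (haw : a.Disjoint w) :
    IsPathList E s t (a ++ y :: w) := by
  obtain ⟨hnodup, hs, -, hchain⟩ := h
  obtain ⟨hnodup', -, ht, hchain'⟩ := h'
  refine ⟨?_, by simpa using hs, by simpa using ht, ?_⟩
  · rw [List.nodup_append'] at hnodup hnodup' ⊢
    have hya : y ∉ a := fun hy ↦ hnodup.2.2 hy List.mem_cons_self
    exact ⟨hnodup.1, hnodup'.2.1, List.disjoint_cons_right.2 ⟨hya, haw⟩⟩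
  · exact List.isChain_split.2 ⟨(List.isChain_split.1 hchain).1, (List.isChain_split.1 hchain').2⟩

variable [DecidableEq V]

theorem arcsOf_subset (hl : IsPathList E s t l) : arcsOf l ⊆ E :=
  arcsOf_subset_of_isChain hl.2.2.2

theorem arcsOf_nonempty (hl : IsPathList E s t l) (hst : s ≠ t) : (arcsOf l).Nonempty := by
  obtain ⟨-, hs, ht, -⟩ := hl
  match l with
  | [] => simp at hs
  | [x] => exact absurd (by simp_all) hst
  | x :: y :: l => exact ⟨(x, y), mem_arcsOf_append_cons_cons [] x y l⟩

end IsPathList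

section Flow

variable {V : Type*} [DecidableEq V] {E S : Finset (V × V)} {c f : V × V → ℝ} {s t : V}
  {γ : Finset (V × V) → ℝ} {l : List V}

theorem sum_flowValue (E : Finset (V × V)) (f : V × V → ℝ) (X : Finset V) :
    ∑ v ∈ X, flowValue E v f = ∑ e ∈ E with e.1 ∈ X, f e - ∑ e ∈ E with e.2 ∈ X, f e := by
  simp only [flowValue, Finset.sum_sub_distrib, Finset.sum_fiberwise_eq_sum_filter]

theorem sum_flowValue_le_sum_leavingArcs (hf : ∀ e ∈ E, 0 ≤ f e) (X : Finset V) :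
    ∑ v ∈ X, flowValue E v f ≤ ∑ e ∈ leavingArcs E X, f e := by
  rw [sum_flowValue, leavingArcs, Finset.sum_filter, Finset.sum_filter, Finset.sum_filter,
    ← Finset.sum_sub_distrib]
  refine Finset.sum_le_sum fun e he ↦ ?_
  have := hf e he
  by_cases h₁ : e.1 ∈ X <;> by_cases h₂ : e.2 ∈ X <;> simp [h₁, h₂, this]

namespace IsFeasibleFlow

theorem flowValue_eq_zero (hf : IsFeasibleFlow E c s t S f) {v : V} (hs : v ≠ s) (ht : v ≠ t) :
    flowValue E v f = 0 :=
  sub_eq_zero.2 (hf.2.2 v hs ht).symm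

theorem flowValue_le_sum_leavingArcs (hf : IsFeasibleFlow E c s t S f) (hS : S ⊆ E)
    {X : Finset V} (hs : s ∈ X) (ht : t ∉ X) :
    flowValue E s f ≤ ∑ e ∈ leavingArcs S X, c e :=
  calc
    flowValue E s f = ∑ v ∈ X, flowValue E v f :=
      (Finset.sum_eq_single_of_mem s hs fun _ hv hvs ↦
        hf.flowValue_eq_zero hvs (ne_of_mem_of_not_mem hv ht)).symm
    _ ≤ ∑ e ∈ leavingArcs E X, f e := sum_flowValue_le_sum_leavingArcs (fun e he ↦ (hf.1 e he).1) X
    _ = ∑ e ∈ leavingArcs S X, f e :=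
      (Finset.sum_subset (Finset.filter_subset_filter _ hS) fun e he he' ↦ hf.2.1 e fun heS ↦
        he' (Finset.mem_filter.2 ⟨heS, (Finset.mem_filter.1 he).2⟩)).symm
    _ ≤ ∑ e ∈ leavingArcs S X, c e :=
      Finset.sum_le_sum fun e he ↦ (hf.1 e (hS (Finset.mem_filter.1 he).1)).2

end IsFeasibleFlow

/-- The flow of value `m` along the path with vertex list `l`. -/
def pathFlow (l : List V) (m : ℝ) (e : V × V) : ℝ :=
  if e ∈ arcsOf l then m else 0

theorem flowValue_pathFlow (hl : IsPathList E s t l) (m : ℝ) (v : V) :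
    flowValue E v (pathFlow l m) = (if s = v then m else 0) - if t = v then m else 0 := by
  rw [← sum_arcsOf_sub (fun w ↦ if w = v then m else 0) hl.1 hl.2.1 hl.2.2.1, flowValue,
    Finset.sum_filter, Finset.sum_filter, ← Finset.sum_sub_distrib]
  refine (Finset.sum_subset_zero_on_sdiff hl.arcsOf_subset ?_ ?_).symm
  · intro e he
    simp [pathFlow, (Finset.mem_sdiff.1 he).2]
  · intro e he
    simp [pathFlow, he]

theorem isFeasibleFlow_pathFlow (hl : IsPathList E s t l) (hc : ∀ e ∈ E, 0 ≤ c e)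
    {m : ℝ} (hm : 0 ≤ m) (hmc : ∀ e ∈ arcsOf l, m ≤ c e) :
    IsFeasibleFlow E c s t (arcsOf l) (pathFlow l m) := by
  refine ⟨fun e he ↦ ?_, fun e he ↦ if_neg he, fun v hs ht ↦ (sub_eq_zero.1 ?_).symm⟩
  · by_cases hel : e ∈ arcsOf l
    · simp [pathFlow, hel, hm, hmc e hel]
    · simp [pathFlow, hel, hc e he]
  · rw [← flowValue, flowValue_pathFlow hl, if_neg hs.symm, if_neg ht.symm, sub_zero]

namespace IsFlowGame

theorem le_sum_leavingArcs (hγ : IsFlowGame E c s t γ) (hS : S ⊆ E) {X : Finset V}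
    (hs : s ∈ X) (ht : t ∉ X) : γ S ≤ ∑ e ∈ leavingArcs S X, c e := by
  obtain ⟨f, hf, hfS⟩ := (hγ S hS).1
  exact hfS ▸ hf.flowValue_le_sum_leavingArcs hS hs ht

theorem capacity_nonneg (hγ : IsFlowGame E c s t γ) {e : V × V} (he : e ∈ E) : 0 ≤ c e := by
  obtain ⟨f, hf, -⟩ := (hγ E subset_rfl).1
  exact (hf.1 e he).1.trans (hf.1 e he).2

theorem capacity_le_of_isMinOn (hγ : IsFlowGame E c s t γ) (hl : IsPathList E s t l)
    {b : V × V} (hb : b ∈ arcsOf l) (hmin : IsMinOn c (arcsOf l) b) :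
    c b ≤ γ (arcsOf l) := by
  have hst : s ≠ t := by
    obtain ⟨l₁, l₂, rfl⟩ := exists_append_of_mem_arcsOf hb
    exact hl.source_ne_target
  have hfeasible : IsFeasibleFlow E c s t (arcsOf l) (pathFlow l (c b)) :=
    isFeasibleFlow_pathFlow hl (fun _ ↦ hγ.capacity_nonneg)
      (hγ.capacity_nonneg (hl.arcsOf_subset hb)) hmin
  refine (hγ _ hl.arcsOf_subset).2 ⟨_, hfeasible, ?_⟩
  simp [flowValue_pathFlow hl, hst.symm]

theorem pos_of_arcsOf_nonempty (hγ : IsFlowGame E c s t γ) (hc : ∀ e ∈ E, 0 < c e)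
    (hl : IsPathList E s t l) (hne : (arcsOf l).Nonempty) : 0 < γ (arcsOf l) := by
  obtain ⟨b, hb, hmin⟩ := Finset.exists_min_image (arcsOf l) c hne
  exact (hc b (hl.arcsOf_subset hb)).trans_le (hγ.capacity_le_of_isMinOn hl hb hmin)

theorem nonpos_of_ssubset_arcsOf (hγ : IsFlowGame E c s t γ) (hl : IsPathList E s t l)
    (hS : S ⊂ arcsOf l) : γ S ≤ 0 := by
  obtain ⟨⟨u, v⟩, huv, huvS⟩ := Finset.exists_of_ssubset hS
  obtain ⟨l₁, l₂, rfl⟩ := exists_append_of_mem_arcsOf huv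
  set X : Finset V := (l₁ ++ [u]).toFinset
  have hin : ∀ x ∈ l₁ ++ [u], x ∈ X := fun _ ↦ List.mem_toFinset.2
  have hout : ∀ x ∈ v :: l₂, x ∉ X := fun _ hx hX ↦ hl.disjoint (List.mem_toFinset.1 hX) hx
  have hcut : leavingArcs S X = ∅ := by
    refine Finset.eq_empty_of_forall_notMem fun e he ↦ ?_
    have he' : e ∈ leavingArcs (arcsOf (l₁ ++ u :: v :: l₂)) X :=
      Finset.filter_subset_filter _ hS.subset he
    rw [leavingArcs_arcsOf hin hout, Finset.mem_singleton] at he'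
    exact huvS (he' ▸ (Finset.mem_filter.1 he).1)
  calc
    γ S ≤ ∑ e ∈ leavingArcs S X, c e :=
      hγ.le_sum_leavingArcs (hS.subset.trans hl.arcsOf_subset) (hin _ hl.source_mem)
        (hout _ hl.target_mem)
    _ = 0 := by rw [hcut, Finset.sum_empty]

theorem inter_nonpos (hγ : IsFlowGame E c s t γ) {p q : List V} (hp : IsPathList E s t p)
    (hq : IsPathList E s t q) (hne : arcsOf p ≠ arcsOf q) : γ (arcsOf p ∩ arcsOf q) ≤ 0 := by
  by_cases hpq : arcsOf p ⊆ arcsOf q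
  · rw [Finset.inter_eq_left.2 hpq]
    exact hγ.nonpos_of_ssubset_arcsOf hq (hpq.ssubset_of_ne hne)
  · exact hγ.nonpos_of_ssubset_arcsOf hp
      (Finset.inter_subset_left.ssubset_of_ne (mt Finset.inter_eq_left.1 hpq))

end IsFlowGame

end Flow

namespace GameConvex

variable {V : Type*} [DecidableEq V] {E : Finset (V × V)} {γ : Finset (V × V) → ℝ}

theorem union_sub_le_union_sub (hγ : GameConvex E γ) {S T R : Finset (V × V)} (hST : S ⊆ T)
    (hT : T ⊆ E) (hR : R ⊆ E) (hRT : Disjoint R T) :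
    γ (S ∪ R) - γ S ≤ γ (T ∪ R) - γ T := by
  induction R using Finset.induction_on with
  | empty => simp
  | insert e R he ih =>
    obtain ⟨heE, hRE⟩ := Finset.insert_subset_iff.1 hR
    obtain ⟨heT, hRT⟩ := Finset.disjoint_insert_left.1 hRT
    have hmarginal : γ (insert e (S ∪ R)) - γ (S ∪ R) ≤ γ (insert e (T ∪ R)) - γ (T ∪ R) :=
      hγ e heE _ _ (Finset.union_subset_union_left hST)
        (Finset.subset_erase.2 ⟨Finset.union_subset hT hRE, by simp [heT, he]⟩)
    rw [Finset.union_insert, Finset.union_insert]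
    linarith [ih hRE hRT]

theorem add_le_union_add_inter (hγ : GameConvex E γ) {A B : Finset (V × V)} (hA : A ⊆ E)
    (hB : B ⊆ E) : γ A + γ B ≤ γ (A ∪ B) + γ (A ∩ B) := by
  have h := hγ.union_sub_le_union_sub (Finset.inter_subset_right (s₁ := A)) hB
    (Finset.sdiff_subset.trans hA) Finset.sdiff_disjoint
  rw [Finset.union_comm (A ∩ B), Finset.sdiff_union_inter, Finset.union_sdiff_self_eq_union,
    Finset.union_comm B] at h
  linarith

end GameConvex

section Bottleneck

theorem isMinOn_of_eq_pathCap {V : Type*} {c : V × V → ℝ} {P : Finset (V × V)} {b : V × V}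
    (hb : c b = pathCap c P) : IsMinOn c P b :=
  fun _ he ↦ hb.trans_le (csInf_le (P.finite_toSet.image c).bddBelow ⟨_, he, rfl⟩)

variable {V : Type*} [DecidableEq V] {E : Finset (V × V)} {c : V × V → ℝ} {s t u v : V}
  {γ : Finset (V × V) → ℝ} {p₁ p₂ q₁ q₂ : List V}

theorem IsFlowGame.union_le_of_disjoint (hγ : IsFlowGame E c s t γ)
    (hP : IsPathList E s t (p₁ ++ u :: v :: p₂)) (hQ : IsPathList E s t (q₁ ++ u :: v :: q₂))
    (hpq : p₁.Disjoint q₂) (hqp : q₁.Disjoint p₂) :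
    γ (arcsOf (p₁ ++ u :: v :: p₂) ∪ arcsOf (q₁ ++ u :: v :: q₂)) ≤ c (u, v) := by
  set X : Finset V := (p₁ ++ q₁ ++ [u]).toFinset with hX
  have hinP : ∀ x ∈ p₁ ++ [u], x ∈ X := by simp +contextual [hX, or_imp]
  have hinQ : ∀ x ∈ q₁ ++ [u], x ∈ X := by simp +contextual [hX, or_imp]
  have hdisj : (p₁ ++ q₁ ++ [u]).Disjoint (v :: (p₂ ++ q₂)) := by
    have hPdisj := hP.disjoint
    have hQdisj := hQ.disjoint
    simp only [List.disjoint_append_left, List.disjoint_append_right, List.disjoint_cons_right,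
      List.mem_append] at hPdisj hQdisj ⊢
    tauto
  have hout : ∀ x ∈ v :: (p₂ ++ q₂), x ∉ X := fun _ hx hX ↦ hdisj (List.mem_toFinset.1 hX) hx
  have houtP : ∀ x ∈ v :: p₂, x ∉ X := fun x hx ↦
    hout x (List.cons_subset_cons v (List.subset_append_left p₂ q₂) hx)
  have houtQ : ∀ x ∈ v :: q₂, x ∉ X := fun x hx ↦
    hout x (List.cons_subset_cons v (List.subset_append_right p₂ q₂) hx)
  calc
    _ ≤ ∑ e ∈ leavingArcs (arcsOf (p₁ ++ u :: v :: p₂) ∪ arcsOf (q₁ ++ u :: v :: q₂)) X, c e :=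
      hγ.le_sum_leavingArcs (Finset.union_subset hP.arcsOf_subset hQ.arcsOf_subset)
        (hinP _ hP.source_mem) (houtP _ hP.target_mem)
    _ = ∑ e ∈ {(u, v)}, c e := by
      rw [leavingArcs, Finset.filter_union, ← leavingArcs, ← leavingArcs,
        leavingArcs_arcsOf hinP houtP, leavingArcs_arcsOf hinQ houtQ, Finset.union_self]
    _ = c (u, v) := Finset.sum_singleton _ _

theorem arcsOf_eq_of_disjoint (hc : ∀ e ∈ E, 0 < c e) (hγ : IsFlowGame E c s t γ)
    (hconv : GameConvex E γ) (hP : IsPathList E s t (p₁ ++ u :: v :: p₂))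
    (hQ : IsPathList E s t (q₁ ++ u :: v :: q₂))
    (hmin : IsMinOn c (arcsOf (p₁ ++ u :: v :: p₂)) (u, v))
    (hpq : p₁.Disjoint q₂) (hqp : q₁.Disjoint p₂) :
    arcsOf (p₁ ++ u :: v :: p₂) = arcsOf (q₁ ++ u :: v :: q₂) := by
  by_contra hne
  have hPcap := hγ.capacity_le_of_isMinOn hP (mem_arcsOf_append_cons_cons ..) hmin
  have hQpos := hγ.pos_of_arcsOf_nonempty hc hQ ⟨_, mem_arcsOf_append_cons_cons ..⟩
  have hinter := hγ.inter_nonpos hP hQ hne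
  have hunion := hγ.union_le_of_disjoint hP hQ hpq hqp
  have hsupermodular := hconv.add_le_union_add_inter hP.arcsOf_subset hQ.arcsOf_subset
  linarith

theorem arcsOf_eq_of_common_prefix (hc : ∀ e ∈ E, 0 < c e) (hγ : IsFlowGame E c s t γ)
    (hconv : GameConvex E γ) (hP : IsPathList E s t (p₁ ++ u :: v :: p₂))
    (hQ : IsPathList E s t (p₁ ++ u :: v :: q₂))
    (hmin : IsMinOn c (arcsOf (p₁ ++ u :: v :: p₂)) (u, v)) :
    arcsOf (p₁ ++ u :: v :: p₂) = arcsOf (p₁ ++ u :: v :: q₂) :=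
  arcsOf_eq_of_disjoint hc hγ hconv hP hQ hmin hQ.disjoint_before_after hP.disjoint_before_after

theorem arcsOf_eq_of_common_suffix (hc : ∀ e ∈ E, 0 < c e) (hγ : IsFlowGame E c s t γ)
    (hconv : GameConvex E γ) (hP : IsPathList E s t (p₁ ++ u :: v :: p₂))
    (hQ : IsPathList E s t (q₁ ++ u :: v :: p₂))
    (hmin : IsMinOn c (arcsOf (p₁ ++ u :: v :: p₂)) (u, v)) :
    arcsOf (p₁ ++ u :: v :: p₂) = arcsOf (q₁ ++ u :: v :: p₂) :=
  arcsOf_eq_of_disjoint hc hγ hconv hP hQ hmin hP.disjoint_before_after hQ.disjoint_before_after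

theorem arcsOf_splice_eq_or_eq (hc : ∀ e ∈ E, 0 < c e) (hγ : IsFlowGame E c s t γ)
    (hconv : GameConvex E γ) (hst : s ≠ t) {a a' d w : List V} {y : V}
    (hP : IsPathList E s t (a ++ y :: d)) (hQ : IsPathList E s t (a' ++ y :: w))
    (hA : IsPathList E s t (a ++ y :: w)) :
    arcsOf (a ++ y :: w) = arcsOf (a ++ y :: d) ∨
      arcsOf (a ++ y :: w) = arcsOf (a' ++ y :: w) := by
  obtain ⟨⟨x, x'⟩, hx, hmin⟩ := Finset.exists_min_image _ c (hA.arcsOf_nonempty hst)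
  rw [arcsOf_append_cons, Finset.mem_union] at hx
  obtain hx | hx := hx <;> obtain ⟨k₁, k₂, hk⟩ := exists_append_of_mem_arcsOf hx
  · left
    have hsplit (l : List V) : ∃ k, a ++ y :: l = k₁ ++ x :: x' :: k :=
      ⟨k₂ ++ l, by rw [List.append_cons, hk]; simp⟩
    obtain ⟨kA, hkA⟩ := hsplit w
    obtain ⟨kP, hkP⟩ := hsplit d
    rw [hkA] at hA hmin ⊢
    rw [hkP] at hP ⊢
    exact arcsOf_eq_of_common_prefix hc hγ hconv hA hP hmin
  · right
    have hsplit (l : List V) : l ++ y :: w = (l ++ k₁) ++ x :: x' :: k₂ := by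
      rw [hk, List.append_assoc]
    rw [hsplit] at hA hmin hQ ⊢
    rw [hsplit a']
    exact arcsOf_eq_of_common_suffix hc hγ hconv hA hQ hmin

theorem disjoint_of_common_arc (hc : ∀ e ∈ E, 0 < c e) (hγ : IsFlowGame E c s t γ)
    (hconv : GameConvex E γ) (hP : IsPathList E s t (p₁ ++ u :: v :: p₂))
    (hQ : IsPathList E s t (q₁ ++ u :: v :: q₂)) : p₁.Disjoint q₂ := by
  by_contra hmeet
  obtain ⟨a, y, d, r, w, rfl, rfl, had⟩ := exists_append_of_not_disjoint hmeet
  have hPy : a ++ y :: d ++ u :: v :: p₂ = a ++ y :: (d ++ u :: v :: p₂) := by simp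
  have hQy : q₁ ++ u :: v :: (r ++ y :: w) = (q₁ ++ u :: v :: r) ++ y :: w := by simp
  have huvP := mem_arcsOf_append_cons_cons (a ++ y :: d) u v p₂
  have huvQ := mem_arcsOf_append_cons_cons q₁ u v (r ++ y :: w)
  have huP : u ∉ a ++ y :: d := fun hu ↦ List.disjoint_of_nodup_append hP.1 hu List.mem_cons_self
  have huQ : u ∉ v :: (r ++ y :: w) := fun hu ↦ hQ.disjoint (by simp) hu
  have huA : u ∉ a ++ y :: w := by grind
  have hst : s ≠ t := hP.source_ne_target
  rw [hPy] at hP huvP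
  rw [hQy] at hQ huvQ
  have hA : IsPathList E s t (a ++ y :: w) :=
    hP.splice hQ (List.disjoint_of_subset_right (by simp) had)
  obtain hAP | hAQ := arcsOf_splice_eq_or_eq hc hγ hconv hst hP hQ hA
  · exact huA (mem_of_mem_arcsOf (hAP ▸ huvP)).1
  · exact huA (mem_of_mem_arcsOf (hAQ ▸ huvQ)).1

theorem arcsOf_eq_of_isMinOn (hc : ∀ e ∈ E, 0 < c e) (hγ : IsFlowGame E c s t γ)
    (hconv : GameConvex E γ) (hP : IsPathList E s t (p₁ ++ u :: v :: p₂))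
    (hQ : IsPathList E s t (q₁ ++ u :: v :: q₂))
    (hmin : IsMinOn c (arcsOf (p₁ ++ u :: v :: p₂)) (u, v)) :
    arcsOf (p₁ ++ u :: v :: p₂) = arcsOf (q₁ ++ u :: v :: q₂) :=
  arcsOf_eq_of_disjoint hc hγ hconv hP hQ hmin (disjoint_of_common_arc hc hγ hconv hP hQ)
    (disjoint_of_common_arc hc hγ hconv hQ hP)

end Bottleneck

theorem bottleneck_exclusivity_general
    {V : Type*} [DecidableEq V]
    (E : Finset (V × V)) (c : V × V → ℝ) (s t : V) (γ : Finset (V × V) → ℝ)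
    (hc : ∀ e ∈ E, 0 < c e)
    (hγ : IsFlowGame E c s t γ)
    (hconv : GameConvex E γ) :
    ∀ b : V × V, IsBottleneck E c s t b →
      ∃! P : Finset (V × V), IsSTPath E s t P ∧ b ∈ P := by
  rintro ⟨u, v⟩ ⟨P, hP, hbP, hcap⟩
  refine ⟨P, ⟨hP, hbP⟩, ?_⟩
  rintro Q ⟨⟨q, hq, rfl⟩, hbQ⟩
  obtain ⟨p, hp, rfl⟩ := hP
  obtain ⟨p₁, p₂, rfl⟩ := exists_append_of_mem_arcsOf hbP
  obtain ⟨q₁, q₂, rfl⟩ := exists_append_of_mem_arcsOf hbQ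
  exact (arcsOf_eq_of_isMinOn hc hγ hconv hp hq (isMinOn_of_eq_pathCap hcap)).symm

/-- Bottleneck exclusivity.  If every arc lies on some `s`-`t` path and
the flow game is convex, then every bottleneck arc belongs to exactly one `s`-`t` path. -/
theorem bottleneck_exclusivity
    {V : Type*} [Fintype V] [DecidableEq V]
    (E : Finset (V × V)) (c : V × V → ℝ) (s t : V) (γ : Finset (V × V) → ℝ)
    (hst : s ≠ t) (hc : ∀ e ∈ E, 0 < c e)
    (hγ : IsFlowGame E c s t γ)
    (hcover : ∀ e ∈ E, ∃ P : Finset (V × V), IsSTPath E s t P ∧ e ∈ P)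
    (hconv : GameConvex E γ) :
    ∀ b : V × V, IsBottleneck E c s t b →
      ∃! P : Finset (V × V), IsSTPath E s t P ∧ b ∈ P :=
  bottleneck_exclusivity_general E c s t γ hc hγ hconv
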